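/- There exists a constant C > 0 such that for all X ≥ 3, |∑_{d ≤ D} χ₄(d)/φ(d) − (π/4)·∏_p (1 + χ₄(p)/(p(p−1)))| ≤ C·X^{-1/20}, where D = X^{1/2}/(log X)^A for any fixed A > 10. -/

import Mathlib

open Real Finset

/-- The non-principal Dirichlet character modulo 4, as a function on ℕ, real-valued. -/
noncomputable def chi4 (d : ℕ) : ℝ :=
  if d % 4 = 1 then 1 else if d % 4 = 3 then -1 else 0

/-! For a completely multiplicative `f` with `|f| ≤ 1`, comparing values at prime powers gives the
Dirichlet convolution `f/φ = h * (f/id)` with `h n = f n μ(n)² / (n φ(n))`. Since `n ≤ φ(n) τ(n)`,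
the series `∑ |h d| d^θ` is dominated by `∑ τ(d) d^(θ-2)` and converges for every `θ < 1`, while
`∑ h d` equals the Euler product `∏ (1 + f p / (p (p - 1)))`. Hence, if the partial sums of
`f n / n` approach `L` at rate `N^(-θ)`, those of `f n / φ(n)` approach `L ∑ h d` at the same rate.
For `χ₄` the sum `∑ χ₄(n)/n` is the alternating Leibniz series for `π/4`, with error at most the
first omitted term. -/

open ArithmeticFunction Filter Topology
open scoped ArithmeticFunction.Moebius ArithmeticFunction.zeta

section Convolution

variable {θ : ℝ}

lemma hasSum_mul_sum_Ioc_div {R : Type*} [Semiring R] [TopologicalSpace R]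
    (h g : ArithmeticFunction R) (N : ℕ) :
    HasSum (fun d ↦ h d * ∑ m ∈ Ioc 0 (N / d), g m) (∑ n ∈ Ioc 0 N, (h * g) n) := by
  rw [sum_Ioc_mul_eq_sum_sum]
  refine hasSum_sum_of_ne_finset_zero fun d hd ↦ ?_
  rcases d.eq_zero_or_pos with rfl | hd_pos
  · simp
  · have hNd : N / d = 0 := Nat.div_eq_of_lt (by simp only [mem_Ioc] at hd; omega)
    simp [hNd]

lemma natCast_div_add_one_rpow_neg_le (hθ : 0 ≤ θ) (N : ℕ) {d : ℕ} (hd : 0 < d) :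
    (((N / d : ℕ) : ℝ) + 1) ^ (-θ) ≤ (d : ℝ) ^ θ * ((N : ℝ) + 1) ^ (-θ) := by
  have hd' : (0 : ℝ) < d := by exact_mod_cast hd
  have hquot : ((N : ℝ) + 1) / d ≤ ((N / d : ℕ) : ℝ) + 1 := by
    rw [div_le_iff₀' hd']
    exact_mod_cast Nat.lt_mul_div_succ N hd
  calc (((N / d : ℕ) : ℝ) + 1) ^ (-θ) ≤ (((N : ℝ) + 1) / d) ^ (-θ) :=
        rpow_le_rpow_of_nonpos (by positivity) hquot (by linarith)
    _ = (d : ℝ) ^ θ * ((N : ℝ) + 1) ^ (-θ) := by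
        rw [div_rpow (by positivity) hd'.le, rpow_neg hd'.le, div_inv_eq_mul, mul_comm]

lemma summable_norm_of_summable_norm_mul_rpow {E : Type*} [SeminormedAddCommGroup E]
    {h : ArithmeticFunction E} (hθ : 0 ≤ θ)
    (hh : Summable fun d : ℕ ↦ ‖h d‖ * (d : ℝ) ^ θ) : Summable fun d ↦ ‖h d‖ := by
  refine hh.of_nonneg_of_le (fun _ ↦ norm_nonneg _) fun d ↦ ?_
  rcases d.eq_zero_or_pos with rfl | hd
  · simp
  · exact le_mul_of_one_le_right (norm_nonneg _) (one_le_rpow (by exact_mod_cast hd) hθ)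

theorem norm_sum_Ioc_mul_sub_tsum_mul_le {R : Type*} [NormedRing R] [CompleteSpace R]
    {h g : ArithmeticFunction R} {L : R} {K : ℝ} (hθ : 0 ≤ θ)
    (hh : Summable fun d : ℕ ↦ ‖h d‖ * (d : ℝ) ^ θ)
    (hg : ∀ M : ℕ, ‖∑ m ∈ Ioc 0 M, g m - L‖ ≤ K * ((M : ℝ) + 1) ^ (-θ)) (N : ℕ) :
    ‖∑ n ∈ Ioc 0 N, (h * g) n - (∑' d, h d) * L‖ ≤
      K * ((N : ℝ) + 1) ^ (-θ) * ∑' d : ℕ, ‖h d‖ * (d : ℝ) ^ θ := by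
  have hK : 0 ≤ K := by simpa using (norm_nonneg _).trans (hg 0)
  have hsum : Summable h := (summable_norm_of_summable_norm_mul_rpow hθ hh).of_norm
  have herror := (hasSum_mul_sum_Ioc_div h g N).sub (hsum.hasSum.mul_right L)
  refine herror.norm_le_of_bounded (hh.hasSum.mul_left _) fun d ↦ ?_
  rcases d.eq_zero_or_pos with rfl | hd
  · simp
  calc ‖h d * ∑ m ∈ Ioc 0 (N / d), g m - h d * L‖
      ≤ ‖h d‖ * ‖∑ m ∈ Ioc 0 (N / d), g m - L‖ := by rw [← mul_sub]; exact norm_mul_le _ _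
    _ ≤ ‖h d‖ * (K * ((d : ℝ) ^ θ * ((N : ℝ) + 1) ^ (-θ))) := by
        gcongr
        exact (hg _).trans <| by gcongr; exact natCast_div_add_one_rpow_neg_le hθ N hd
    _ = K * ((N : ℝ) + 1) ^ (-θ) * (‖h d‖ * (d : ℝ) ^ θ) := by ring

end Convolution

section Divisors

lemma le_totient_mul_card_divisors (n : ℕ) : n ≤ n.totient * #n.divisors := by
  rcases n.eq_zero_or_pos with rfl | hn
  · simp
  calc n = ∑ d ∈ n.divisors, d.totient := n.sum_totient.symm
    _ ≤ ∑ _d ∈ n.divisors, n.totient := sum_le_sum fun d hd ↦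
        Nat.le_of_dvd (Nat.totient_pos.2 hn)
          (Nat.totient_dvd_of_dvd (Nat.dvd_of_mem_divisors hd))
    _ = n.totient * #n.divisors := by rw [sum_const, smul_eq_mul, mul_comm]

lemma summable_card_divisors_div_rpow {s : ℝ} (hs : 1 < s) :
    Summable fun n : ℕ ↦ (#n.divisors : ℝ) / (n : ℝ) ^ s := by
  have hzeta : LSeriesSummable (fun n ↦ (ζ : ArithmeticFunction ℂ) n) s :=
    LSeriesSummable_zeta_iff.2 (by simpa using hs)
  refine (ArithmeticFunction.LSeriesSummable_mul hzeta hzeta).norm.congr fun n ↦ ?_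
  have hcard : ((ζ : ArithmeticFunction ℂ) * ζ) n = #n.divisors := by
    rw [coe_zeta_mul_apply, sum_congr rfl fun d hd ↦
      by rw [natCoe_apply, zeta_apply_ne (Nat.pos_of_mem_divisors hd).ne']]
    simp
  rcases eq_or_ne n 0 with rfl | hn
  · simp
  · rw [LSeries.norm_term_eq, if_neg hn, hcard, Complex.norm_natCast, Complex.ofReal_re]

end Divisors

section Factorization

variable {F : Type*} [Field F] (f : ℕ →*₀ F)

/-- The arithmetic function `n ↦ f n / n`, whose sum is the value at `1` of the Dirichlet
series of `f`. -/
def divId : ArithmeticFunction F := ⟨fun n ↦ f n / n, by simp⟩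

/-- The arithmetic function `n ↦ f n / φ(n)`, whose partial sums are to be estimated. -/
def divTotient : ArithmeticFunction F := ⟨fun n ↦ f n / n.totient, by simp⟩

/-- The arithmetic function `n ↦ f n μ(n)² / (n φ(n))`, the Dirichlet quotient of `f n / φ(n)` by
`f n / n`. The factor `μ(n)²` encodes the restriction to squarefree `n`. -/
def totientCorrection : ArithmeticFunction F :=
  ⟨fun n ↦ f n * (μ n : F) ^ 2 / (n * n.totient), by simp⟩

lemma divId_apply (n : ℕ) : divId f n = f n / n := rfl

lemma divTotient_apply (n : ℕ) : divTotient f n = f n / n.totient := rfl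

lemma totientCorrection_apply (n : ℕ) :
    totientCorrection f n = f n * (μ n : F) ^ 2 / (n * n.totient) := rfl

lemma isMultiplicative_divId : (divId f).IsMultiplicative := by
  refine ⟨by simp [divId_apply], fun {m n} _ ↦ ?_⟩
  simp only [divId_apply, map_mul, Nat.cast_mul, mul_div_mul_comm]

lemma isMultiplicative_divTotient : (divTotient f).IsMultiplicative := by
  refine ⟨by simp [divTotient_apply], fun {m n} hmn ↦ ?_⟩
  simp only [divTotient_apply, map_mul, Nat.totient_mul hmn, Nat.cast_mul, mul_div_mul_comm]

lemma isMultiplicative_totientCorrection : (totientCorrection f).IsMultiplicative := by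
  refine ⟨by simp [totientCorrection_apply], fun {m n} hmn ↦ ?_⟩
  simp only [totientCorrection_apply, map_mul, Nat.totient_mul hmn,
    isMultiplicative_moebius.map_mul_of_coprime hmn, Nat.cast_mul, Int.cast_mul]
  rw [← mul_div_mul_comm]
  congr 1 <;> ring

variable {p : ℕ}

lemma totientCorrection_prime (hp : p.Prime) :
    totientCorrection f p = f p / ((p : F) * ((p : F) - 1)) := by
  simp [totientCorrection_apply, moebius_apply_prime hp, Nat.totient_prime hp,
    Nat.cast_sub hp.one_le]

lemma totientCorrection_prime_pow (hp : p.Prime) {k : ℕ} (hk : 2 ≤ k) :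
    totientCorrection f (p ^ k) = 0 := by
  simp [totientCorrection_apply, moebius_apply_prime_pow hp (show k ≠ 0 by omega),
    show k ≠ 1 by omega]

lemma totientCorrection_mul_apply_prime_pow_succ (g : ArithmeticFunction F) (hp : p.Prime) (k : ℕ) :
    (totientCorrection f * g) (p ^ (k + 1)) =
      g (p ^ (k + 1)) + f p / ((p : F) * ((p : F) - 1)) * g (p ^ k) := by
  rw [mul_apply, Nat.sum_divisorsAntidiagonal (fun x y ↦ totientCorrection f x * g y),
    Nat.sum_divisors_prime_pow hp, sum_range_succ', sum_range_succ',
    sum_eq_zero fun j _ ↦ by rw [totientCorrection_prime_pow f hp (by omega), zero_mul]]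
  have hdiv : p ^ (k + 1) / p = p ^ k := by rw [pow_succ, Nat.mul_div_cancel _ hp.pos]
  simp only [zero_add, pow_one, pow_zero, Nat.div_one, hdiv, totientCorrection_prime f hp,
    (isMultiplicative_totientCorrection f).map_one, one_mul]
  ring

theorem totientCorrection_mul_divId [CharZero F] :
    totientCorrection f * divId f = divTotient f := by
  rw [((isMultiplicative_totientCorrection f).mul
    (isMultiplicative_divId f)).eq_iff_eq_on_prime_powers _ _ (isMultiplicative_divTotient f)]
  rintro p (_ | k) hp
  · simp [(isMultiplicative_totientCorrection f).map_one, (isMultiplicative_divId f).map_one,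
      (isMultiplicative_divTotient f).map_one]
  have hp0 : (p : F) ≠ 0 := by exact_mod_cast hp.ne_zero
  have hp1 : (p : F) - 1 ≠ 0 := sub_ne_zero.2 (by exact_mod_cast hp.ne_one)
  rw [totientCorrection_mul_apply_prime_pow_succ f _ hp, divId_apply, divId_apply,
    divTotient_apply, Nat.totient_prime_pow_succ hp]
  push_cast [map_pow, Nat.cast_sub hp.one_le]
  field_simp
  ring

end Factorization

section Bounded

variable {𝕜 : Type*} [RCLike 𝕜] {f : ℕ →*₀ 𝕜} {θ : ℝ}

lemma norm_totientCorrection_le (hf : ∀ n, ‖f n‖ ≤ 1) (n : ℕ) :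
    ‖totientCorrection f n‖ ≤ #n.divisors / (n : ℝ) ^ 2 := by
  rcases n.eq_zero_or_pos with rfl | hn
  · simp
  have hμ : ‖(μ n : 𝕜)‖ ≤ 1 := by
    rcases moebius_eq_or n with hμ | hμ | hμ <;> simp [hμ]
  have hle : (n : ℝ) ≤ n.totient * #n.divisors := by
    exact_mod_cast le_totient_mul_card_divisors n
  calc ‖totientCorrection f n‖ = ‖f n‖ * ‖(μ n : 𝕜)‖ ^ 2 / (n * n.totient) := by
        simp [totientCorrection_apply]
    _ ≤ 1 * 1 ^ 2 / (n * n.totient) := by gcongr; exact hf n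
    _ ≤ #n.divisors / (n : ℝ) ^ 2 := by
        rw [div_le_div_iff₀ (by positivity) (by positivity)]
        nlinarith

lemma summable_norm_totientCorrection_mul_rpow (hf : ∀ n, ‖f n‖ ≤ 1) (hθ : θ < 1) :
    Summable fun d : ℕ ↦ ‖totientCorrection f d‖ * (d : ℝ) ^ θ := by
  refine (summable_card_divisors_div_rpow (s := 2 - θ) (by linarith)).of_nonneg_of_le
    (fun d ↦ by positivity) fun d ↦ ?_
  rcases d.eq_zero_or_pos with rfl | hd
  · simp
  have hd' : (0 : ℝ) < d := by exact_mod_cast hd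
  calc ‖totientCorrection f d‖ * (d : ℝ) ^ θ ≤ #d.divisors / (d : ℝ) ^ 2 * (d : ℝ) ^ θ := by
        gcongr
        exact norm_totientCorrection_le hf d
    _ = #d.divisors / (d : ℝ) ^ (2 - θ) := by
        rw [rpow_sub hd', rpow_two, div_div_eq_mul_div, div_mul_eq_mul_div]

lemma tsum_totientCorrection_eq_tprod (hf : ∀ n, ‖f n‖ ≤ 1) :
    ∑' n, totientCorrection f n = ∏' p : Nat.Primes, (1 + f p / ((p : 𝕜) * ((p : 𝕜) - 1))) := by
  have hsum : Summable fun n ↦ ‖totientCorrection f n‖ := by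
    simpa using summable_norm_totientCorrection_mul_rpow hf zero_lt_one
  rw [← (isMultiplicative_totientCorrection f).eulerProduct_tprod hsum]
  refine tprod_congr fun p ↦ ?_
  rw [tsum_eq_sum (s := range 2) fun k hk ↦
    totientCorrection_prime_pow f p.2 (not_lt.1 (mt mem_range.2 hk))]
  simp [sum_range_succ, (isMultiplicative_totientCorrection f).map_one,
    totientCorrection_prime f p.2]

theorem exists_norm_sum_div_totient_sub_le {L : 𝕜} {K : ℝ} (hf : ∀ n, ‖f n‖ ≤ 1) (hθ₀ : 0 ≤ θ)
    (hθ₁ : θ < 1)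
    (hL : ∀ M : ℕ, ‖∑ m ∈ Ioc 0 M, f m / m - L‖ ≤ K * ((M : ℝ) + 1) ^ (-θ)) :
    ∃ C : ℝ, 0 < C ∧ ∀ N : ℕ,
      ‖∑ n ∈ Ioc 0 N, f n / n.totient -
        L * ∏' p : Nat.Primes, (1 + f p / ((p : 𝕜) * ((p : 𝕜) - 1)))‖ ≤
      C * ((N : ℝ) + 1) ^ (-θ) := by
  set S : ℝ := ∑' d : ℕ, ‖totientCorrection f d‖ * (d : ℝ) ^ θ
  refine ⟨max (K * S) 1, by positivity, fun N ↦ ?_⟩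
  have hbound := norm_sum_Ioc_mul_sub_tsum_mul_le (g := divId f) hθ₀
    (summable_norm_totientCorrection_mul_rpow hf hθ₁) hL N
  rw [totientCorrection_mul_divId, tsum_totientCorrection_eq_tprod hf, mul_comm _ L] at hbound
  calc _ ≤ K * ((N : ℝ) + 1) ^ (-θ) * S := hbound
    _ = K * S * ((N : ℝ) + 1) ^ (-θ) := by ring
    _ ≤ max (K * S) 1 * ((N : ℝ) + 1) ^ (-θ) := by gcongr; exact le_max_left _ _

end Bounded

section Leibniz

lemma abs_alternating_sum_sub_le {E : Type*} [Ring E] [LinearOrder E] [IsOrderedRing E]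
    [TopologicalSpace E] [OrderClosedTopology E] {a : ℕ → E} {l : E} (ha : Antitone a)
    (hl : Tendsto (fun n ↦ ∑ i ∈ range n, (-1) ^ i * a i) atTop (𝓝 l)) (n : ℕ) :
    |∑ i ∈ range n, (-1) ^ i * a i - l| ≤ a n := by
  have hlower := ha.alternating_series_le_tendsto hl
  have hupper := ha.tendsto_le_alternating_series hl
  rcases n.even_or_odd' with ⟨k, rfl | rfl⟩
  · have hnext := hupper k
    rw [sum_range_succ, pow_mul, neg_one_sq, one_pow, one_mul] at hnext
    rw [abs_sub_comm, abs_of_nonneg (sub_nonneg.2 (hlower k))]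
    exact sub_le_iff_le_add'.2 hnext
  · have hnext := hlower (k + 1)
    rw [show 2 * (k + 1) = 2 * k + 1 + 1 by ring, sum_range_succ, pow_succ, pow_mul, neg_one_sq,
      one_pow, one_mul, neg_one_mul, ← sub_eq_add_neg] at hnext
    rw [abs_of_nonneg (sub_nonneg.2 (hupper k))]
    exact sub_le_comm.1 hnext

lemma sum_Ioc_eq_sum_range_odd {E : Type*} [AddCommMonoid E] {a : ℕ → E}
    (ha : ∀ k, a (2 * k) = 0) (M : ℕ) :
    ∑ m ∈ Ioc 0 M, a m = ∑ i ∈ range ((M + 1) / 2), a (2 * i + 1) := by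
  induction M with
  | zero => simp
  | succ M ih =>
    rw [sum_Ioc_succ_top M.zero_le, ih]
    rcases M.even_or_odd' with ⟨k, rfl | rfl⟩
    · rw [show (2 * k + 1) / 2 = k by omega, show (2 * k + 1 + 1) / 2 = k + 1 by omega,
        sum_range_succ]
    · rw [show (2 * k + 1 + 1) / 2 = k + 1 by omega, show (2 * k + 1 + 1 + 1) / 2 = k + 1 by omega,
        show 2 * k + 1 + 1 = 2 * (k + 1) by ring, ha, add_zero]

lemma chi4_eq_χ₄ (n : ℕ) : chi4 n = (ZMod.χ₄ n : ℤ) := by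
  rw [ZMod.χ₄_nat_eq_if_mod_four, chi4]
  split_ifs <;> first | omega | simp

lemma chi4_two_mul (k : ℕ) : chi4 (2 * k) = 0 := by
  rw [chi4, if_neg (by omega), if_neg (by omega)]

lemma chi4_two_mul_add_one (k : ℕ) : chi4 (2 * k + 1) = (-1) ^ k := by
  rw [chi4_eq_χ₄, ZMod.χ₄_eq_neg_one_pow (by omega), show (2 * k + 1) / 2 = k by omega]
  simp

lemma abs_chi4_le_one (n : ℕ) : |chi4 n| ≤ 1 := by
  unfold chi4
  split_ifs <;> simp

/-- The character `chi4` as a completely multiplicative function. -/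
noncomputable def chi4Hom : ℕ →*₀ ℝ where
  toFun := chi4
  map_zero' := by simp [chi4]
  map_one' := by simp [chi4]
  map_mul' m n := by simp only [chi4_eq_χ₄, Nat.cast_mul, map_mul, Int.cast_mul]

lemma abs_sum_chi4_div_sub_pi_div_four_le (M : ℕ) :
    |∑ m ∈ Ioc 0 M, chi4 m / m - π / 4| ≤ 1 / ((M : ℝ) + 1) := by
  have hanti : Antitone fun i : ℕ ↦ 1 / (2 * (i : ℝ) + 1) := fun i j hij ↦ by
    dsimp only
    gcongr
  have hleibniz : Tendsto (fun n ↦ ∑ i ∈ range n, (-1 : ℝ) ^ i * (1 / (2 * (i : ℝ) + 1)))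
      atTop (𝓝 (π / 4)) := by
    simpa only [mul_one_div] using tendsto_sum_pi_div_four
  have hodd : ∑ m ∈ Ioc 0 M, chi4 m / m =
      ∑ i ∈ range ((M + 1) / 2), (-1 : ℝ) ^ i * (1 / (2 * (i : ℝ) + 1)) := by
    rw [sum_Ioc_eq_sum_range_odd fun k ↦ by rw [chi4_two_mul, zero_div]]
    refine sum_congr rfl fun i _ ↦ ?_
    rw [chi4_two_mul_add_one, mul_one_div]
    push_cast
    rfl
  rw [hodd]
  refine (abs_alternating_sum_sub_le hanti hleibniz _).trans ?_
  apply one_div_le_one_div_of_le (by positivity)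
  exact_mod_cast (show M + 1 ≤ 2 * ((M + 1) / 2) + 1 by omega)

end Leibniz

theorem exists_abs_sum_chi4_div_totient_sub_le {θ : ℝ} (hθ₀ : 0 ≤ θ) (hθ₁ : θ < 1) :
    ∃ C : ℝ, 0 < C ∧ ∀ N : ℕ,
      |∑ d ∈ Icc 1 N, chi4 d / d.totient -
        π / 4 * ∏' p : Nat.Primes, (1 + chi4 p / ((p : ℝ) * ((p : ℝ) - 1)))| ≤
      C * ((N : ℝ) + 1) ^ (-θ) := by
  refine exists_norm_sum_div_totient_sub_le (f := chi4Hom) (K := 1) abs_chi4_le_one hθ₀ hθ₁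
    fun M ↦ (abs_sum_chi4_div_sub_pi_div_four_le M).trans ?_
  rw [one_mul, one_div, ← rpow_neg_one]
  exact rpow_le_rpow_of_exponent_le (by simp) (by linarith)

lemma exists_log_rpow_le_mul_rpow (r : ℝ) {s : ℝ} (hs : 0 < s) :
    ∃ C : ℝ, 0 < C ∧ ∀ x : ℝ, exp 1 ≤ x → log x ^ r ≤ C * x ^ s := by
  set k : ℝ := |r| + 1
  have hk : 0 < k := by positivity
  set ε : ℝ := s / k
  have hε : 0 < ε := by positivity
  refine ⟨(ε ^ k)⁻¹, by positivity, fun x hx ↦ ?_⟩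
  have hx₀ : 0 < x := (exp_pos 1).trans_le hx
  have hlog : 1 ≤ log x := (le_log_iff_exp_le hx₀).2 hx
  calc log x ^ r ≤ log x ^ k :=
        rpow_le_rpow_of_exponent_le hlog ((le_abs_self r).trans (lt_add_one _).le)
    _ ≤ (x ^ ε / ε) ^ k := by gcongr; exact log_le_rpow_div hx₀.le hε
    _ = (ε ^ k)⁻¹ * x ^ s := by
        rw [div_rpow (by positivity) hε.le, ← rpow_mul hx₀.le, div_mul_cancel₀ s hk.ne',
          div_eq_inv_mul]

lemma floor_add_one_rpow_neg_le {y α : ℝ} (hy : 0 < y) (hα : 0 ≤ α) :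
    ((⌊y⌋₊ : ℝ) + 1) ^ (-α) ≤ y ^ (-α) :=
  rpow_le_rpow_of_nonpos hy (Nat.lt_floor_add_one y).le (neg_nonpos.2 hα)

theorem sum_chi4_div_totient_general (A : ℝ) {θ : ℝ} (hθ : θ < 1 / 2) :
    ∃ C : ℝ, 0 < C ∧
      ∀ X : ℝ, 3 ≤ X →
        |(∑ d ∈ Finset.Icc 1 ⌊X ^ ((1 : ℝ) / 2) / Real.log X ^ A⌋₊,
            chi4 d / (Nat.totient d : ℝ))
          - Real.pi / 4 *
            ∏' p : Nat.Primes, (1 + chi4 p / ((p : ℝ) * ((p : ℝ) - 1)))|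
          ≤ C * X ^ (-θ) := by
  obtain ⟨α, hα, hα₁⟩ : ∃ α, max (2 * θ) 0 < α ∧ α < 1 :=
    exists_between (max_lt (by linarith) one_pos)
  obtain ⟨hθα, hα₀⟩ := max_lt_iff.1 hα
  obtain ⟨C, hC, hsum⟩ := exists_abs_sum_chi4_div_totient_sub_le hα₀.le hα₁
  obtain ⟨B, hB, hlog⟩ := exists_log_rpow_le_mul_rpow (A * α) (s := α / 2 - θ) (by linarith)
  refine ⟨C * B, by positivity, fun X hX ↦ (hsum _).trans ?_⟩
  have hX₀ : 0 < X := by linarith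
  have hlogX : 0 < log X := log_pos (by linarith)
  rw [mul_assoc]
  gcongr
  calc _ ≤ (X ^ ((1 : ℝ) / 2) / log X ^ A) ^ (-α) :=
        floor_add_one_rpow_neg_le (by positivity) hα₀.le
    _ = X ^ (-(α / 2)) * log X ^ (A * α) := by
        rw [div_rpow (by positivity) (by positivity), ← rpow_mul hX₀.le, ← rpow_mul hlogX.le,
          mul_neg A, rpow_neg hlogX.le, div_inv_eq_mul]
        ring_nf
    _ ≤ X ^ (-(α / 2)) * (B * X ^ (α / 2 - θ)) := by
        gcongr
        exact hlog X (exp_one_lt_three.le.trans hX)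
    _ = B * X ^ (-θ) := by
        rw [mul_left_comm, ← rpow_add hX₀]
        ring_nf

/-- For any fixed `A > 10`, with `D = X^{1/2}/(log X)^A`, the partial sums
`∑_{d ≤ D} χ₄(d)/φ(d)` approach `(π/4) ∏_p (1 + χ₄(p)/(p(p-1)))` with error `O(X^{-1/20})`. -/
theorem sum_chi4_div_totient (A : ℝ) (hA : 10 < A) :
    ∃ C : ℝ, 0 < C ∧
      ∀ X : ℝ, 3 ≤ X →
        |(∑ d ∈ Finset.Icc 1 ⌊X ^ ((1 : ℝ) / 2) / Real.log X ^ A⌋₊,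
            chi4 d / (Nat.totient d : ℝ))
          - Real.pi / 4 *
            ∏' p : Nat.Primes, (1 + chi4 p / ((p : ℝ) * ((p : ℝ) - 1)))|
          ≤ C * X ^ (-(1 : ℝ) / 20) := by
  rw [neg_div]
  exact sum_chi4_div_totient_general A (by norm_num)
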